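/- arXiv:1011.6195 — 3 statements merged into one kernel-verified Lean document; each statement's English description precedes it below -/
import Mathlib

section
/- For every complex q with |q| < √2 - 1, both of the following series converge absolutely and the identity holds: (-2q³(1-q)²/(1-2q)²) · ∑_{m=1}^∞ [ (-1)^m q^{2m} / ((1-2q)^m (1-q-q^{m+1})) · ∏_{k=1}^{m-1} (1-q-q^k+q^{k+1}-q^{k+2})/(1-q-q^{k+1}) ] + 2q(3-10q+9q²-q³)/((1-2q)²(1-q)) = C(q) + A(q) · ((v(q);q)_∞/(q u(q);q)_∞) · ∑_{n=1}^∞ (-1)^n (q^{2n}/(1-2q)^n) · (u(q) q^{n+1};q)_∞/(v(q) q^n;q)_∞. In particular, the common value PA(q) defines an analytic function of q on the open disc |q| < √2 - 1. -/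
open Complex Filter Asymptotics Topology

noncomputable section

/-- finite q-Pochhammer symbol `(x;q)_n` -/
def qPF (x q : ℂ) (n : ℕ) : ℂ := ∏ i ∈ Finset.range n, (1 - x * q ^ i)

/-- infinite q-Pochhammer symbol `(x;q)_∞` -/
def qPI (x q : ℂ) : ℂ := ∏' i : ℕ, (1 - x * q ^ i)

def uF (q : ℂ) : ℂ := q / (1 - q)
def vF (q : ℂ) : ℂ := (1 - q + q ^ 2) / (1 - q)
def aF (q : ℂ) : ℂ := q ^ 2 / (1 - q + q ^ 2)
def AF (q : ℂ) : ℂ := 2 * q * (1 - q) ^ 2 / (1 - 2 * q) ^ 2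
def CF (q : ℂ) : ℂ := 2 * q * (3 - 10 * q + 9 * q ^ 2 - q ^ 3) / ((1 - q) * (1 - 2 * q) ^ 2)
def DF (q : ℂ) : ℂ := CF q - (q ^ 2 / (1 - q) ^ 2) * AF q * qPI (vF q) q / qPI (aF q * vF q) q

/-- the `m`-th term (for `m ≥ 1`) of the explicit series for `PA(q)` -/
def PAterm (q : ℂ) (m : ℕ) : ℂ :=
  (-1) ^ m * q ^ (2 * m) / ((1 - 2 * q) ^ m * (1 - q - q ^ (m + 1))) *
    ∏ k ∈ Finset.Icc 1 (m - 1),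
      ((1 - q - q ^ k + q ^ (k + 1) - q ^ (k + 2)) / (1 - q - q ^ (k + 1)))

/-- the explicit convergent series defining `PA(q)` for small `q` -/
def PAseries (q : ℂ) : ℂ :=
  (-2 * q ^ 3 * (1 - q) ^ 2 / (1 - 2 * q) ^ 2) * (∑' m : ℕ, PAterm q (m + 1))
    + 2 * q * (3 - 10 * q + 9 * q ^ 2 - q ^ 3) / ((1 - 2 * q) ^ 2 * (1 - q))

/-- the `n`-th term (for `n ≥ 1`) of the q-hypergeometric series -/
def qHypTerm (q : ℂ) (n : ℕ) : ℂ :=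
  (-1) ^ n * (q ^ (2 * n) / (1 - 2 * q) ^ n) *
    (qPI (uF q * q ^ (n + 1)) q / qPI (vF q * q ^ n) q)

lemma aux_radius {r : ℝ} (h : r < Real.sqrt 2 - 1) (h0 : 0 ≤ r) :
    r ^ 2 + 2 * r < 1 ∧ r < 0.42 := by
  have h2 : Real.sqrt 2 ^ 2 = 2 := Real.sq_sqrt (by norm_num)
  have h1 : (r + 1) ^ 2 < Real.sqrt 2 ^ 2 := by gcongr; linarith
  have h3 : r ^ 2 + 2 * r < 1 := by nlinarith
  exact ⟨h3, by nlinarith⟩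

lemma aux_one_sub {x : ℂ} {r : ℝ} (hx : ‖x‖ ≤ r) : 1 - r ≤ ‖1 - x‖ := by
  have := norm_sub_norm_le (1 : ℂ) x
  rw [norm_one] at this
  linarith

lemma aux_pow {q : ℂ} {r : ℝ} (hq : ‖q‖ ≤ r) (h1 : r < 1) {m n : ℕ} (hmn : m ≤ n) :
    ‖q ^ n‖ ≤ r ^ m := by
  have h0 : 0 ≤ r := (norm_nonneg q).trans hq
  rw [norm_pow]
  exact (pow_le_pow_left₀ (norm_nonneg q) hq n).trans (pow_le_pow_of_le_one h0 h1.le hmn)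

lemma aux_den {q : ℂ} {r : ℝ} (hq : ‖q‖ ≤ r) (h1 : r < 0.42) {k : ℕ} (hk : 1 ≤ k) :
    0.4 ≤ ‖1 - q - q ^ (k + 1)‖ := by
  have h0 : 0 ≤ r := (norm_nonneg q).trans hq
  have h2 := aux_pow hq (by linarith) (show 2 ≤ k + 1 by omega)
  have h3 : ‖q + q ^ (k + 1)‖ ≤ r + r ^ 2 := (norm_add_le _ _).trans (by linarith)
  have h4 := aux_one_sub h3
  rw [sub_sub]
  nlinarith

lemma aux_den_ne {q : ℂ} {r : ℝ} (hq : ‖q‖ ≤ r) (h1 : r < 0.42) {k : ℕ} (hk : 1 ≤ k) :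
    1 - q - q ^ (k + 1) ≠ 0 := by
  have := aux_den hq h1 hk
  rw [← norm_pos_iff]
  linarith

lemma aux_num_ne {q : ℂ} {r : ℝ} (hq : ‖q‖ ≤ r) (h1 : r < 0.42) {k : ℕ} (hk : 1 ≤ k) :
    1 - q - q ^ k + q ^ (k + 1) - q ^ (k + 2) ≠ 0 := by
  have h0 : 0 ≤ r := (norm_nonneg q).trans hq
  intro h
  have h2 : (1 - q) * (1 - q ^ k) = q ^ (k + 2) := by linear_combination h
  have h3 := aux_pow hq (by linarith) (show 3 ≤ k + 2 by omega)
  have h4 := aux_pow hq (by linarith) hk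
  rw [pow_one] at h4
  rw [← h2, norm_mul] at h3
  have h5 := aux_one_sub h4
  have h6 := aux_one_sub hq
  have h7 : (1 - r) * (1 - r) ≤ ‖1 - q‖ * ‖1 - q ^ k‖ :=
    mul_le_mul h6 h5 (by linarith) (norm_nonneg _)
  nlinarith [mul_nonneg h0 h0]

lemma aux_one_sub_ne {q : ℂ} {r : ℝ} (hq : ‖q‖ ≤ r) (h1 : r < 0.42) : 1 - q ≠ 0 := by
  have := aux_one_sub hq
  rw [← norm_pos_iff]
  linarith

lemma aux_one_sub_two {q : ℂ} {r : ℝ} (hq : ‖q‖ ≤ r) : 1 - 2 * r ≤ ‖1 - 2 * q‖ := by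
  apply aux_one_sub
  rw [norm_mul]
  norm_num
  exact hq

lemma aux_one_sub_two_ne {q : ℂ} {r : ℝ} (hq : ‖q‖ ≤ r) (h1 : r < 0.42) :
    1 - 2 * q ≠ 0 := by
  have := aux_one_sub_two hq
  rw [← norm_pos_iff]
  linarith

lemma one_sub_u {q : ℂ} (h : 1 - q ≠ 0) (k : ℕ) :
    1 - uF q * q ^ k = (1 - q - q ^ (k + 1)) / (1 - q) := by
  unfold uF
  field_simp
  ring

lemma one_sub_v {q : ℂ} (h : 1 - q ≠ 0) (k : ℕ) :
    1 - vF q * q ^ k = (1 - q - q ^ k + q ^ (k + 1) - q ^ (k + 2)) / (1 - q) := by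
  unfold vF
  field_simp
  ring

lemma qPI_summable {q : ℂ} (x : ℂ) (hq : ‖q‖ < 1) : Summable (fun i : ℕ => ‖-(x * q ^ i)‖) := by
  simp only [norm_neg, norm_mul, norm_pow]
  exact (summable_geometric_of_lt_one (norm_nonneg q) hq).mul_left _

lemma qPI_multipliable {q : ℂ} (x : ℂ) (hq : ‖q‖ < 1) :
    Multipliable (fun i : ℕ => 1 - x * q ^ i) := by
  simpa [sub_eq_add_neg] using multipliable_one_add_of_summable (qPI_summable x hq)

lemma qPI_step {q : ℂ} (x : ℂ) (hq : ‖q‖ < 1) : qPI x q = (1 - x) * qPI (x * q) q := by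
  unfold qPI
  have h : ∀ i : ℕ, 1 - x * q * q ^ i = 1 - x * q ^ (i + 1) := fun i => by ring
  have hm := qPI_multipliable (x * q) hq
  simp only [h] at hm ⊢
  rw [tprod_eq_zero_mul' (f := fun i : ℕ => 1 - x * q ^ i) hm]
  simp

lemma qPI_ne {q : ℂ} (x : ℂ) (hq : ‖q‖ < 1) (h : ∀ i : ℕ, 1 - x * q ^ i ≠ 0) :
    qPI x q ≠ 0 := by
  unfold qPI
  have := tprod_one_add_ne_zero_of_summable (f := fun i : ℕ => -(x * q ^ i))
    (fun i => by simpa [sub_eq_add_neg] using h i) (qPI_summable x hq)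
  simpa [sub_eq_add_neg] using this

lemma qPI_u_ne {q : ℂ} (hq : ‖q‖ < 0.42) {n : ℕ} (hn : 1 ≤ n) : qPI (uF q * q ^ n) q ≠ 0 := by
  apply qPI_ne _ (by linarith)
  intro i
  rw [mul_assoc, ← pow_add, one_sub_u (aux_one_sub_ne le_rfl hq)]
  exact div_ne_zero (aux_den_ne le_rfl hq (by omega)) (aux_one_sub_ne le_rfl hq)

lemma qPI_v_ne {q : ℂ} (hq : ‖q‖ < 0.42) {n : ℕ} (hn : 1 ≤ n) : qPI (vF q * q ^ n) q ≠ 0 := by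
  apply qPI_ne _ (by linarith)
  intro i
  rw [mul_assoc, ← pow_add, one_sub_v (aux_one_sub_ne le_rfl hq)]
  exact div_ne_zero (aux_num_ne le_rfl hq (by omega)) (aux_one_sub_ne le_rfl hq)

lemma key_ratio {q : ℂ} (hq : ‖q‖ < 0.42) (n : ℕ) :
    qPI (uF q * q ^ (n + 2)) q / qPI (vF q * q ^ (n + 1)) q =
      (1 - q) * (qPI (uF q * q ^ 1) q / qPI (vF q * q ^ 1) q) *
        ((1 - q - q ^ (n + 2))⁻¹ * ∏ k ∈ Finset.Icc 1 n,
          ((1 - q - q ^ k + q ^ (k + 1) - q ^ (k + 2)) / (1 - q - q ^ (k + 1)))) := by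
  have hq1 : ‖q‖ < 1 := by linarith
  have h1 := aux_one_sub_ne le_rfl hq
  have hu : ∀ n : ℕ, qPI (uF q * q ^ n) q
      = (1 - q - q ^ (n + 1)) / (1 - q) * qPI (uF q * q ^ (n + 1)) q := fun n => by
    rw [qPI_step _ hq1, one_sub_u h1, mul_assoc, ← pow_succ]
  have hv : ∀ n : ℕ, qPI (vF q * q ^ n) q
      = (1 - q - q ^ n + q ^ (n + 1) - q ^ (n + 2)) / (1 - q) * qPI (vF q * q ^ (n + 1)) q :=
    fun n => by rw [qPI_step _ hq1, one_sub_v h1, mul_assoc, ← pow_succ]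
  induction n with
  | zero =>
    have hd := aux_den_ne le_rfl hq le_rfl
    have h3 := qPI_v_ne hq le_rfl
    rw [hu 1]
    simp only [zero_add] at *
    norm_num at *
    field_simp
  | succ n ih =>
    have hd := aux_den_ne le_rfl hq (show 1 ≤ n + 1 by omega)
    have hd2 := aux_den_ne le_rfl hq (show 1 ≤ n + 2 by omega)
    have hn := aux_num_ne le_rfl hq (show 1 ≤ n + 1 by omega)
    have h3 := qPI_v_ne hq (show 1 ≤ n + 2 by omega)
    rw [Finset.prod_Icc_succ_top (by omega)]
    rw [hu (n + 2), hv (n + 1)] at ih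
    have e : qPI (uF q * q ^ (n + 1 + 2)) q / qPI (vF q * q ^ (n + 1 + 1)) q
      = (1 - q - q ^ (n + 1) + q ^ (n + 2) - q ^ (n + 3)) / (1 - q - q ^ (n + 3)) *
      ((1 - q - q ^ (n + 2 + 1)) / (1 - q) * qPI (uF q * q ^ (n + 2 + 1)) q /
      ((1 - q - q ^ (n + 1) + q ^ (n + 1 + 1) - q ^ (n + 1 + 2)) / (1 - q) *
        qPI (vF q * q ^ (n + 1 + 1)) q)) := by
      simp only [add_assoc] at *
      norm_num at *
      field_simp
    rw [e, ih]
    simp only [add_assoc] at *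
    norm_num at *
    field_simp

lemma hyp_eq {q : ℂ} (hq : ‖q‖ < 0.42) (n : ℕ) :
    qHypTerm q (n + 1) =
      (1 - q) * (qPI (uF q * q ^ 1) q / qPI (vF q * q ^ 1) q) * PAterm q (n + 1) := by
  unfold qHypTerm PAterm
  rw [show n + 1 + 1 = n + 2 from rfl, key_ratio hq n, Nat.add_sub_cancel, div_eq_mul_inv,
    div_eq_mul_inv ((-1) ^ (n + 1) * q ^ (2 * (n + 1))), mul_inv]
  ring

lemma PAterm_bound {q : ℂ} {r : ℝ} (hq : ‖q‖ ≤ r) (h1 : r < 0.42) (n : ℕ) :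
    ‖PAterm q (n + 1)‖ ≤
      (r ^ 2 / (1 - 2 * r)) ^ (n + 1) * (2.5 * Real.exp (10 * (1 - r)⁻¹)) := by
  have h0 : 0 ≤ r := (norm_nonneg q).trans hq
  have hp : ‖∏ k ∈ Finset.Icc 1 n,
      ((1 - q - q ^ k + q ^ (k + 1) - q ^ (k + 2)) / (1 - q - q ^ (k + 1)))‖
      ≤ Real.exp (10 * (1 - r)⁻¹) := by
    rw [norm_prod]
    calc _ ≤ ∏ k ∈ Finset.Icc 1 n, (1 + 10 * r ^ k) := by
          refine Finset.prod_le_prod (fun _ _ => norm_nonneg _) fun k hk => ?_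
          have hk1 : 1 ≤ k := (Finset.mem_Icc.1 hk).1
          have hd := aux_den_ne hq h1 hk1
          have hd' := aux_den hq h1 hk1
          have e : (1 - q - q ^ k + q ^ (k + 1) - q ^ (k + 2)) / (1 - q - q ^ (k + 1))
              = 1 - q ^ k * (1 - q) ^ 2 / (1 - q - q ^ (k + 1)) := by
            field_simp
            ring
          rw [e]
          refine (norm_sub_le _ _).trans ?_
          rw [norm_one, norm_div, norm_mul, norm_pow (1 - q)]
          have ha := aux_pow hq (by linarith) (le_refl k)
          have hb : ‖1 - q‖ ≤ 2 := (norm_sub_le _ _).trans (by rw [norm_one]; linarith)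
          have hc : ‖1 - q‖ ^ 2 ≤ 4 := by nlinarith [norm_nonneg (1 - q)]
          have hk0 : 0 ≤ r ^ k := pow_nonneg h0 k
          gcongr
          rw [div_le_iff₀ (by linarith)]
          calc _ ≤ r ^ k * 4 := by gcongr
            _ ≤ _ := by nlinarith
      _ ≤ Real.exp (∑ k ∈ Finset.Icc 1 n, 10 * r ^ k) :=
          Real.prod_one_add_le_exp_sum _ (fun k => by positivity)
      _ ≤ _ := by
          apply Real.exp_le_exp.2
          rw [← Finset.mul_sum]
          gcongr
          rw [← tsum_geometric_of_lt_one h0 (by linarith)]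
          exact (summable_geometric_of_lt_one h0 (by linarith)).sum_le_tsum _
            (fun i _ => pow_nonneg h0 i)
  unfold PAterm
  rw [Nat.add_sub_cancel, norm_mul]
  have e : ‖(-1) ^ (n + 1) * q ^ (2 * (n + 1)) /
      ((1 - 2 * q) ^ (n + 1) * (1 - q - q ^ (n + 1 + 1)))‖
      = (‖q‖ ^ 2 / ‖1 - 2 * q‖) ^ (n + 1) * ‖1 - q - q ^ (n + 1 + 1)‖⁻¹ := by
    simp [norm_mul, norm_div, norm_pow, div_pow, pow_mul]
    ring
  rw [e, mul_assoc]
  have h2 := aux_one_sub_two hq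
  have h3 : ‖1 - q - q ^ (n + 1 + 1)‖⁻¹ ≤ 2.5 := by
    have := aux_den hq h1 (show 1 ≤ n + 1 by omega)
    calc _ ≤ (0.4 : ℝ)⁻¹ := inv_anti₀ (by norm_num) this
      _ = _ := by norm_num
  have h4 : 0 < 1 - 2 * r := by linarith
  gcongr

lemma bound_summable {r : ℝ} (h0 : 0 ≤ r) (h1 : r < Real.sqrt 2 - 1) :
    Summable (fun n : ℕ =>
      (r ^ 2 / (1 - 2 * r)) ^ (n + 1) * (2.5 * Real.exp (10 * (1 - r)⁻¹))) := by
  obtain ⟨h2, h3⟩ := aux_radius h1 h0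
  have h4 : 0 < 1 - 2 * r := by linarith
  apply Summable.mul_right
  apply (summable_nat_add_iff 1).2
  apply summable_geometric_of_lt_one (by positivity)
  rw [div_lt_one h4]
  linarith

lemma PAterm_diff {q : ℂ} (hq : ‖q‖ < 0.42) (n : ℕ) :
    DifferentiableAt ℂ (fun q => PAterm q (n + 1)) q := by
  have hd := aux_den_ne le_rfl hq (show 1 ≤ n + 1 by omega)
  have h2 := aux_one_sub_two_ne le_rfl hq
  unfold PAterm
  refine DifferentiableAt.mul ?_ ?_
  · refine DifferentiableAt.div (by fun_prop) (by fun_prop) ?_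
    exact mul_ne_zero (pow_ne_zero _ h2) hd
  · refine DifferentiableAt.fun_finsetProd fun k hk => ?_
    refine DifferentiableAt.div (by fun_prop) (by fun_prop) ?_
    exact aux_den_ne le_rfl hq (Finset.mem_Icc.1 hk).1

lemma PAseries_diff {q : ℂ} (hq : ‖q‖ < Real.sqrt 2 - 1) : DifferentiableAt ℂ PAseries q := by
  obtain ⟨r, hr1, hr2⟩ := exists_between hq
  have h0 : 0 ≤ r := (norm_nonneg q).trans hr1.le
  have h3 := (aux_radius hr2 h0).2
  have hq3 : ‖q‖ < 0.42 := hr1.trans h3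
  have hs : DifferentiableOn ℂ (fun w : ℂ => ∑' m : ℕ, PAterm w (m + 1)) (Metric.ball 0 r) := by
    refine Complex.differentiableOn_tsum_of_summable_norm (bound_summable h0 hr2) ?_
      Metric.isOpen_ball ?_
    · intro i w hw
      rw [mem_ball_zero_iff] at hw
      exact (PAterm_diff (hw.trans h3) i).differentiableWithinAt
    · intro i w hw
      rw [mem_ball_zero_iff] at hw
      exact PAterm_bound hw.le h3 i
  have hs' := hs.differentiableAt (Metric.isOpen_ball.mem_nhds (mem_ball_zero_iff.2 hr1))
  have h1 := aux_one_sub_ne le_rfl hq3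
  have h2 := aux_one_sub_two_ne le_rfl hq3
  unfold PAseries
  refine DifferentiableAt.add (DifferentiableAt.mul ?_ hs') ?_
  · exact DifferentiableAt.div (by fun_prop) (by fun_prop) (pow_ne_zero _ h2)
  · exact DifferentiableAt.div (by fun_prop) (by fun_prop) (mul_ne_zero (pow_ne_zero _ h2) h1)

/-- For `|q| < √2 - 1`, both series converge absolutely, the explicit series for `PA(q)`
agrees with the q-hypergeometric representation, and the common value is analytic on the
disc `|q| < √2 - 1`. -/
theorem PA_q_hypergeometric_representation :
    (∀ q : ℂ, ‖q‖ < Real.sqrt 2 - 1 →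
      Summable (fun m : ℕ => ‖PAterm q (m + 1)‖) ∧
      Summable (fun n : ℕ => ‖qHypTerm q (n + 1)‖) ∧
      PAseries q =
        CF q + AF q * (qPI (vF q) q / qPI (q * uF q) q) *
          ∑' n : ℕ, qHypTerm q (n + 1)) ∧
    AnalyticOnNhd ℂ PAseries {q : ℂ | ‖q‖ < Real.sqrt 2 - 1} := by
  refine ⟨fun q hq => ?_, ?_⟩
  · have h3 := (aux_radius hq (norm_nonneg q)).2
    have hS : Summable (fun m : ℕ => ‖PAterm q (m + 1)‖) :=
      Summable.of_nonneg_of_le (fun _ => norm_nonneg _) (PAterm_bound le_rfl h3)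
        (bound_summable (norm_nonneg q) hq)
    refine ⟨hS, ?_, ?_⟩
    · simp only [hyp_eq h3, norm_mul _ (PAterm q _)]
      exact hS.mul_left _
    · simp only [hyp_eq h3]
      rw [tsum_mul_left, qPI_step (vF q) (by linarith)]
      have hu := qPI_u_ne h3 le_rfl
      have hv := qPI_v_ne h3 le_rfl
      have h1 := aux_one_sub_ne le_rfl h3
      have h2 := aux_one_sub_two_ne le_rfl h3
      have e1 : 1 - vF q = - q ^ 2 / (1 - q) := by
        unfold vF
        field_simp
        ring
      rw [pow_one] at *
      rw [mul_comm q (uF q), e1]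
      unfold PAseries CF AF
      generalize qPI (uF q * q) q = U at *
      generalize qPI (vF q * q) q = V at *
      field_simp
      ring
  · have ho : IsOpen {q : ℂ | ‖q‖ < Real.sqrt 2 - 1} :=
      isOpen_lt continuous_norm continuous_const
    exact DifferentiableOn.analyticOnNhd
      (fun q hq => (PAseries_diff hq).differentiableWithinAt) ho
end
end

section
/- In the punctured disc { q ∈ ℂ : |q| < 55/100 } \ {1/2}, the function PA(q) is meromorphic, and its poles there are exactly simple poles at the points z̄_k for k ≥ 2, where z̄_k is the unique root in (0,1) of 1 - 2x + x^{k+2} = 0. -/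
open Complex Filter Asymptotics Topology

noncomputable section

/-- the punctured disc `{q : |q| < 55/100} \ {1/2}` -/
def puncDisc : Set ℂ := {q : ℂ | ‖q‖ < 55 / 100 ∧ q ≠ (1 / 2 : ℂ)}


def wN (n : ℕ) (q : ℂ) : ℂ := q / (1 - q) * (q * (1 - 2 * q) + (1 - q + q ^ 2) * q ^ (n + 2))
def dN (n : ℕ) (q : ℂ) : ℂ := 1 - 2 * q + q ^ (n + 2)
def hT (j : ℕ) (q : ℂ) (N : ℕ) : ℂ :=
  (∏ l ∈ Finset.range N, wN (j + l) q / dN (j + l) q) / dN (j + N) q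
def hS (j : ℕ) (q : ℂ) : ℂ := ∑' N : ℕ, hT j q N

lemma hT_succ (j : ℕ) (q : ℂ) (N : ℕ) :
    hT j q (N + 1) = wN j q / dN j q * hT (j + 1) q N := by
  unfold hT
  rw [Finset.prod_range_succ']
  have : ∀ l, j + (l + 1) = j + 1 + l := fun l => by ring
  have h2 : ∏ l ∈ Finset.range N, wN (j + (l + 1)) q / dN (j + (l + 1)) q =
      ∏ l ∈ Finset.range N, wN (j + 1 + l) q / dN (j + 1 + l) q :=
    Finset.prod_congr rfl fun l _ => by rw [this]
  rw [h2, this N, add_zero]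
  ring

lemma hT_bound {j : ℕ} {q : ℂ} {ρ B : ℝ}
    (h1 : ∀ l, ‖wN (j + l) q / dN (j + l) q‖ ≤ ρ) (h2 : ∀ l, ‖(dN (j + l) q)⁻¹‖ ≤ B) (N : ℕ) :
    ‖hT j q N‖ ≤ B * ρ ^ N := by
  have hρ : 0 ≤ ρ := (norm_nonneg _).trans (h1 0)
  unfold hT
  rw [div_eq_mul_inv, norm_mul, norm_prod, mul_comm]
  have : ∏ l ∈ Finset.range N, ‖wN (j + l) q / dN (j + l) q‖ ≤ ρ ^ N := by
    calc _ ≤ ∏ l ∈ Finset.range N, ρ := Finset.prod_le_prod (fun _ _ => norm_nonneg _) (fun l _ => h1 l)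
      _ = ρ ^ N := by simp
  exact mul_le_mul (h2 N) this (Finset.prod_nonneg fun _ _ => norm_nonneg _)
    ((norm_nonneg _).trans (h2 0))

lemma hS_bound {j : ℕ} {q : ℂ} {ρ B : ℝ} (hρ1 : ρ < 1)
    (h1 : ∀ l, ‖wN (j + l) q / dN (j + l) q‖ ≤ ρ) (h2 : ∀ l, ‖(dN (j + l) q)⁻¹‖ ≤ B) :
    Summable (hT j q) ∧ ‖hS j q‖ ≤ B * (1 - ρ)⁻¹ := by
  have hρ : 0 ≤ ρ := (norm_nonneg _).trans (h1 0)
  have hs : HasSum (fun N => B * ρ ^ N) (B * (1 - ρ)⁻¹) :=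
    (hasSum_geometric_of_lt_one hρ hρ1).mul_left B
  exact ⟨Summable.of_norm_bounded hs.summable (hT_bound h1 h2),
    tsum_of_norm_bounded hs (hT_bound h1 h2)⟩

lemma one_sub_ne {q : ℂ} (hq : ‖q‖ < 55 / 100) : 1 - q ≠ 0 := by
  intro h
  have : q = 1 := by linear_combination -h
  rw [this] at hq
  norm_num at hq

lemma one_sub_norm {q : ℂ} (hq : ‖q‖ < 55 / 100) : 45 / 100 ≤ ‖1 - q‖ := by
  have := norm_sub_norm_le (1 : ℂ) q
  rw [norm_one] at this
  linarith

lemma ratio_bound {q : ℂ} {δ : ℝ} (hq : ‖q‖ < 55 / 100) (hδ0 : 0 < δ) (hδ : δ ≤ ‖1 - 2 * q‖) {n : ℕ}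
    (hn : (55 / 100 : ℝ) ^ (n + 2) ≤ δ / 20) :
    ‖wN n q / dN n q‖ ≤ 9 / 10 ∧ ‖(dN n q)⁻¹‖ ≤ 2 / δ ∧ dN n q ≠ 0 := by
  have h1 := one_sub_norm hq
  have hp : ‖q ^ (n + 2)‖ ≤ δ / 20 := by
    rw [norm_pow]
    exact (pow_le_pow_left₀ (norm_nonneg _) hq.le _).trans hn
  have hd : ‖1 - 2 * q‖ - δ / 20 ≤ ‖dN n q‖ := by
    have := norm_sub_norm_le (1 - 2 * q) (-q ^ (n + 2))
    rw [norm_neg, sub_neg_eq_add] at this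
    unfold dN
    linarith
  have hdpos : 0 < ‖dN n q‖ := by linarith
  have hv : ‖1 - q + q ^ 2‖ ≤ 2 := by
    calc ‖1 - q + q ^ 2‖ ≤ ‖(1 : ℂ)‖ + ‖q‖ + ‖q‖ ^ 2 := by
          rw [← norm_pow]
          exact (norm_add_le _ _).trans (by gcongr; exact norm_sub_le _ _)
      _ ≤ 2 := by rw [norm_one]; nlinarith [norm_nonneg q]
  have hw : ‖wN n q‖ ≤ 11 / 9 * (55 / 100 * ‖1 - 2 * q‖ + 2 * (δ / 20)) := by
    unfold wN
    rw [norm_mul, norm_div]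
    have a : ‖q‖ / ‖1 - q‖ ≤ 11 / 9 := by
      rw [div_le_iff₀ (by linarith)]
      linarith
    have b : ‖q * (1 - 2 * q) + (1 - q + q ^ 2) * q ^ (n + 2)‖ ≤
        55 / 100 * ‖1 - 2 * q‖ + 2 * (δ / 20) := by
      refine (norm_add_le _ _).trans ?_
      rw [norm_mul, norm_mul]
      gcongr
    gcongr
  refine ⟨?_, ?_, norm_pos_iff.mp hdpos⟩
  · rw [norm_div, div_le_iff₀ hdpos]
    linarith
  · rw [norm_inv, inv_eq_one_div, div_le_div_iff₀ hdpos hδ0]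
    linarith

lemma exists_n {δ : ℝ} (hδ : 0 < δ) : ∃ n0 : ℕ, ∀ l, (55 / 100 : ℝ) ^ (n0 + l + 2) ≤ δ / 20 := by
  obtain ⟨n, hn⟩ := exists_pow_lt_of_lt_one (show 0 < δ / 20 by positivity)
    (show (55 / 100 : ℝ) < 1 by norm_num)
  refine ⟨n, fun l => le_trans ?_ hn.le⟩
  exact pow_le_pow_of_le_one (by norm_num) (by norm_num) (by omega)

lemma punc_pos {q : ℂ} (hq : q ∈ puncDisc) : 0 < ‖1 - 2 * q‖ := by
  rw [norm_pos_iff]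
  intro h
  apply hq.2
  linear_combination -h / 2

lemma hT_summable {q : ℂ} (hq : q ∈ puncDisc) (j : ℕ) : Summable (hT j q) := by
  obtain ⟨n0, hn0⟩ := exists_n (punc_pos hq)
  have hb := fun l => ratio_bound hq.1 (punc_pos hq) le_rfl (hn0 l)
  have key : ∀ m j, n0 ≤ j + m → Summable (hT j q) := by
    intro m
    induction m with
    | zero =>
      intro j hj
      obtain ⟨i, rfl⟩ := Nat.exists_eq_add_of_le hj
      have e : ∀ l, n0 + i + l = n0 + (i + l) := fun l => by ring
      refine (hS_bound (j := n0 + i) (ρ := 9 / 10) (B := 2 / ‖1 - 2 * q‖) (by norm_num)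
        (fun l => ?_) (fun l => ?_)).1
      · rw [e]; exact (hb _).1
      · rw [e]; exact (hb _).2.1
    | succ m ih =>
      intro j hj
      have := ih (j + 1) (by omega)
      rw [← summable_nat_add_iff 1]
      simp only [hT_succ]
      exact this.mul_left _
  exact key n0 j (by omega)

lemma hS_rec {q : ℂ} (hq : q ∈ puncDisc) (j : ℕ) :
    hS j q = (1 + wN j q * hS (j + 1) q) / dN j q := by
  unfold hS
  rw [(hT_summable hq j).tsum_eq_zero_add]
  simp only [hT_succ, tsum_mul_left]
  simp [hT]
  ring

lemma punc_open : IsOpen puncDisc := by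
  unfold puncDisc
  exact (isOpen_lt continuous_norm continuous_const).inter isOpen_ne

lemma wN_an {q : ℂ} (hq : ‖q‖ < 55 / 100) (n : ℕ) : AnalyticAt ℂ (wN n) q := by
  have := one_sub_ne hq
  unfold wN
  fun_prop (disch := assumption)

lemma dN_an (q : ℂ) (n : ℕ) : AnalyticAt ℂ (dN n) q := by
  unfold dN
  fun_prop

lemma hS_an {q : ℂ} (hq : q ∈ puncDisc) (j : ℕ) (hd : ∀ l, dN (j + l) q ≠ 0) :
    AnalyticAt ℂ (hS j) q := by
  have hpos := punc_pos hq
  set δ := ‖1 - 2 * q‖ / 2 with hδ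
  have hδ0 : 0 < δ := by positivity
  obtain ⟨n0, hn0⟩ := exists_n hδ0
  let U : Set ℂ := {z | ‖z‖ < 55 / 100 ∧ δ < ‖1 - 2 * z‖}
  have hU : IsOpen U := (isOpen_lt continuous_norm continuous_const).inter
    (isOpen_lt continuous_const (show Continuous fun z : ℂ => ‖1 - 2 * z‖ by fun_prop))
  have hqU : q ∈ U := ⟨hq.1, by rw [hδ]; linarith⟩
  have key : ∀ m j, n0 ≤ j + m → (∀ l, dN (j + l) q ≠ 0) → AnalyticAt ℂ (hS j) q := by
    intro m
    induction m with
    | zero =>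
      intro j hj _
      obtain ⟨i, rfl⟩ := Nat.exists_eq_add_of_le hj
      have e : ∀ l, n0 + i + l = n0 + (i + l) := fun l => by ring
      have hb := fun (z : ℂ) (hz : z ∈ U) l => ratio_bound hz.1 hδ0 hz.2.le (hn0 l)
      have hdiff : DifferentiableOn ℂ (hS (n0 + i)) U := by
        refine differentiableOn_tsum_of_summable_norm (u := fun N => 2 / δ * (9 / 10) ^ N) ?_ ?_ hU ?_
        · exact (summable_geometric_of_lt_one (by norm_num) (by norm_num)).mul_left _
        · intro N z hz
          refine DifferentiableAt.differentiableWithinAt (AnalyticAt.differentiableAt ?_)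
          unfold hT
          refine AnalyticAt.div ?_ (dN_an _ _) (by simp only [add_zero] at *; rw [e]; exact (hb z hz _).2.2)
          refine Finset.analyticAt_fun_prod _ fun l _ => ?_
          refine AnalyticAt.div (wN_an hz.1 _) (dN_an _ _) ?_
          simp only [add_zero] at *; rw [e]; exact (hb z hz _).2.2
        · intro N z hz
          refine hT_bound (fun l => ?_) (fun l => ?_) N
          · simp only [add_zero] at *; rw [e]; exact (hb z hz _).1
          · simp only [add_zero] at *; rw [e]; exact (hb z hz _).2.1
      exact hdiff.analyticAt (hU.mem_nhds hqU)
    | succ m ih =>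
      intro j hj hd
      have h1 := ih (j + 1) (by omega) (fun l => by
        have := hd (l + 1); rwa [show j + (l + 1) = j + 1 + l by ring] at this)
      have h2 : AnalyticAt ℂ (fun z => (1 + wN j z * hS (j + 1) z) / dN j z) q :=
        (analyticAt_const.add ((wN_an hq.1 _).mul h1)).div (dN_an _ _) (hd 0)
      refine h2.congr ?_
      filter_upwards [punc_open.mem_nhds hq] with z hz
      exact (hS_rec hz j).symm
  exact key n0 j (by omega) hd

/-! ### agreement with the series -/

lemma small_norms {q : ℂ} (hq : ‖q‖ < 1 / 10) (n : ℕ) : 8 / 10 ≤ ‖1 - q - q ^ (n + 2)‖ := by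
  have h : ‖q ^ (n + 2)‖ ≤ 1 / 100 := by
    rw [norm_pow]
    calc ‖q‖ ^ (n + 2) ≤ ‖q‖ ^ 2 := pow_le_pow_of_le_one (norm_nonneg _) (by linarith) (by omega)
      _ ≤ 1 / 100 := by nlinarith [norm_nonneg q]
  have h1 := norm_sub_norm_le (1 - q) (q ^ (n + 2))
  have h2 := norm_sub_norm_le (1 : ℂ) q
  rw [norm_one] at h2
  linarith

lemma ne_of_norm_ge {z : ℂ} {c : ℝ} (h : c ≤ ‖z‖) (hc : 0 < c) : z ≠ 0 :=
  norm_pos_iff.mp (by linarith)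

lemma small_two {q : ℂ} (hq : ‖q‖ < 1 / 10) : 8 / 10 ≤ ‖1 - 2 * q‖ := by
  have h2 := norm_sub_norm_le (1 : ℂ) (2 * q)
  rw [norm_one, norm_mul, Complex.norm_ofNat] at h2
  linarith

lemma PA_rec {q : ℂ} (hq : ‖q‖ < 1 / 10) (m : ℕ) :
    PAterm q (m + 1 + 1) * ((1 - q - q ^ (m + 3)) * (1 - 2 * q)) =
      -q ^ 2 * (1 - q - q ^ (m + 1) * (1 - q + q ^ 2)) * PAterm q (m + 1) := by
  have a := ne_of_norm_ge (small_norms hq m) (by norm_num)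
  have b := ne_of_norm_ge (small_norms hq (m + 1)) (by norm_num)
  have c := ne_of_norm_ge (small_two hq) (by norm_num)
  unfold PAterm
  simp only [Nat.add_sub_cancel]
  rw [Finset.prod_Icc_succ_top (by omega)]
  generalize ∏ k ∈ Finset.Icc 1 m,
      ((1 - q - q ^ k + q ^ (k + 1) - q ^ (k + 2)) / (1 - q - q ^ (k + 1))) = P
  rw [show m + 1 + 1 = m + 2 by ring] at *
  rw [show m + 2 + 1 = m + 3 by ring] at *
  rw [show m + 1 + 2 = m + 3 by ring] at *
  field_simp
  ring

lemma PA_summable {q : ℂ} (hq : ‖q‖ < 1 / 10) : Summable (fun m => ‖PAterm q (m + 1)‖) := by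
  refine summable_of_ratio_norm_eventually_le (r := 1 / 2) (by norm_num) (Eventually.of_forall fun m => ?_)
  have h := congrArg norm (PA_rec hq m)
  simp only [norm_mul, norm_neg, norm_norm, norm_pow] at h ⊢
  have b := small_norms hq (m + 1)
  rw [show m + 1 + 2 = m + 3 by ring] at b
  have c := small_two hq
  have n1 : ‖1 - q - q ^ (m + 1) * (1 - q + q ^ 2)‖ ≤ 2 := by
    have h1 : ‖1 - q‖ ≤ 11 / 10 := (norm_sub_le _ _).trans (by rw [norm_one]; linarith)
    have h2 : ‖1 - q + q ^ 2‖ ≤ 12 / 10 := (norm_add_le _ _).trans (by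
      rw [norm_pow]; nlinarith [norm_nonneg q])
    have h3 : ‖q ^ (m + 1)‖ ≤ 1 / 10 := by
      rw [norm_pow]
      calc ‖q‖ ^ (m + 1) ≤ ‖q‖ ^ 1 := pow_le_pow_of_le_one (norm_nonneg _) (by linarith) (by omega)
        _ ≤ 1 / 10 := by rw [pow_one]; linarith
    refine (norm_sub_le _ _).trans ?_
    rw [norm_mul]
    nlinarith [norm_nonneg (q ^ (m + 1)), norm_nonneg (1 - q + q ^ 2)]
  have n2 : ‖q‖ ^ 2 ≤ 1 / 100 := by nlinarith [norm_nonneg q]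
  have n3 : ‖q‖ ^ 2 * ‖1 - q - q ^ (m + 1) * (1 - q + q ^ 2)‖ ≤ 1 / 100 * 2 := by gcongr
  have n4 : (8 / 10 : ℝ) * (8 / 10) ≤ ‖1 - q - q ^ (m + 3)‖ * ‖1 - 2 * q‖ := by gcongr
  have p1 := norm_nonneg (PAterm q (m + 1))
  have p2 := norm_nonneg (PAterm q (m + 1 + 1))
  nlinarith [mul_le_mul_of_nonneg_right n3 p1, mul_le_mul_of_nonneg_left n4 p2]

def tS (j : ℕ) (q : ℂ) : ℂ := ∑' m : ℕ, q ^ (j * m) * PAterm q (m + 1)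

lemma tS_le {q : ℂ} (hq : ‖q‖ < 1 / 10) (j m : ℕ) :
    ‖q ^ (j * m) * PAterm q (m + 1)‖ ≤ ‖PAterm q (m + 1)‖ := by
  rw [norm_mul, norm_pow]
  exact mul_le_of_le_one_left (norm_nonneg _) (pow_le_one₀ (norm_nonneg _) (by linarith))

lemma tS_rec {q : ℂ} (hq : ‖q‖ < 1 / 10) (j : ℕ) :
    (1 - q) * dN j q * tS j q = -q ^ 2 + (1 - q) * wN j q * tS (j + 1) q := by
  have hs : ∀ j, Summable (fun m : ℕ => q ^ (j * m) * PAterm q (m + 1)) := fun j =>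
    Summable.of_norm_bounded (PA_summable hq) (tS_le hq j)
  have h1 : ∀ j, tS j q = PAterm q 1 + ∑' m : ℕ, q ^ (j * (m + 1)) * PAterm q (m + 1 + 1) := by
    intro j
    unfold tS
    rw [(hs j).tsum_eq_zero_add]
    simp
  have hs1 : ∀ j, Summable (fun m : ℕ => q ^ (j * (m + 1)) * PAterm q (m + 1 + 1)) := fun j =>
    (summable_nat_add_iff 1).2 (hs j)
  have h2 : (1 - 2 * q) * ((1 - q) * (tS j q - PAterm q 1) - q ^ 2 * (tS (j + 1) q - PAterm q 1)) =
      -q ^ 2 * ((1 - q) * q ^ j * tS j q - q * (1 - q + q ^ 2) * q ^ j * tS (j + 1) q) := by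
    rw [h1 j, h1 (j + 1), add_sub_cancel_left, add_sub_cancel_left, ← h1 j, ← h1 (j + 1)]
    unfold tS
    rw [← tsum_mul_left, ← tsum_mul_left, ← tsum_mul_left, ← tsum_mul_left,
      ← ((hs1 j).mul_left _).tsum_sub ((hs1 (j + 1)).mul_left _),
      ← ((hs j).mul_left _).tsum_sub ((hs (j + 1)).mul_left _), ← tsum_mul_left, ← tsum_mul_left]
    refine tsum_congr fun m => ?_
    have := PA_rec hq m
    have e1 : q ^ ((j + 1) * (m + 1)) = q ^ (j * (m + 1)) * q ^ (m + 1) := by ring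
    have e2 : q ^ ((j + 1) * m) = q ^ (j * m) * q ^ m := by ring
    have e3 : q ^ (j * (m + 1)) = q ^ (j * m) * q ^ j := by ring
    rw [e1, e2, e3]
    linear_combination q ^ (j * m) * q ^ j * this
  have a := ne_of_norm_ge (small_norms hq 0) (by norm_num)
  have c := ne_of_norm_ge (small_two hq) (by norm_num)
  have h0 : (1 - 2 * q) * (1 - q - q ^ 2) * PAterm q 1 = -q ^ 2 := by
    unfold PAterm
    simp only [zero_add] at a
    simp
    field_simp
  have hw : (1 - q) * wN j q = q * (q * (1 - 2 * q) + (1 - q + q ^ 2) * q ^ (j + 2)) := by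
    have := one_sub_ne (q := q) (by linarith)
    unfold wN
    field_simp
  rw [hw]
  unfold dN
  linear_combination h2 + h0

lemma small_punc {q : ℂ} (hq : ‖q‖ < 1 / 10) : q ∈ puncDisc := by
  refine ⟨by linarith, ?_⟩
  rintro rfl
  norm_num at hq

lemma tS_eq {q : ℂ} (hq : ‖q‖ < 1 / 10) : tS 0 q = -q ^ 2 / (1 - q) * hS 0 q := by
  have hq' := small_punc hq
  have hone := one_sub_ne hq'.1
  have hdne : ∀ j, dN j q ≠ 0 := by
    intro j
    have h1 := small_two hq
    have h : ‖q ^ (j + 2)‖ ≤ 1 / 100 := by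
      rw [norm_pow]
      calc ‖q‖ ^ (j + 2) ≤ ‖q‖ ^ 2 := pow_le_pow_of_le_one (norm_nonneg _) (by linarith) (by omega)
        _ ≤ 1 / 100 := by nlinarith [norm_nonneg q]
    have := norm_sub_norm_le (1 - 2 * q) (-q ^ (j + 2))
    rw [norm_neg, sub_neg_eq_add] at this
    exact ne_of_norm_ge (c := 1 / 2) (by unfold dN; linarith) (by norm_num)
  let E : ℕ → ℂ := fun j => tS j q + q ^ 2 / (1 - q) * hS j q
  have hE : ∀ j, E j = wN j q / dN j q * E (j + 1) := by
    intro j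
    have h1 := tS_rec hq j
    have h2 := hS_rec hq' j
    have h3 := hdne j
    simp only [E]
    rw [h2]
    field_simp
    linear_combination h1
  obtain ⟨n0, hn0⟩ := exists_n (punc_pos hq')
  have hb := fun l => ratio_bound hq'.1 (punc_pos hq') le_rfl (hn0 l)
  have e : ∀ i l, n0 + i + l = n0 + (i + l) := fun i l => by ring
  obtain ⟨C, hC⟩ : ∃ C, ∀ i, ‖E (n0 + i)‖ ≤ C := by
    refine ⟨∑' m, ‖PAterm q (m + 1)‖ +
      ‖q ^ 2 / (1 - q)‖ * (2 / ‖1 - 2 * q‖ * (1 - 9 / 10)⁻¹), fun i => ?_⟩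
    refine (norm_add_le _ _).trans (add_le_add ?_ ?_)
    · exact tsum_of_norm_bounded (PA_summable hq).hasSum (tS_le hq _)
    · rw [norm_mul]
      gcongr
      refine (hS_bound (j := n0 + i) (ρ := 9 / 10) (by norm_num) (fun l => ?_) (fun l => ?_)).2
      · rw [e]; exact (hb _).1
      · rw [e]; exact (hb _).2.1
  have hEi : ∀ N i, ‖E (n0 + i)‖ ≤ (9 / 10) ^ N * C := by
    intro N
    induction N with
    | zero => intro i; simpa using hC i
    | succ N ih =>
      intro i
      rw [hE, norm_mul, pow_succ', mul_assoc]
      exact mul_le_mul (hb i).1 (ih (i + 1)) (norm_nonneg _) (by norm_num)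
  have hz : E (n0 + 0) = 0 := by
    have ht : Tendsto (fun N : ℕ => (9 / 10 : ℝ) ^ N * C) atTop (𝓝 (0 * C)) :=
      (tendsto_pow_atTop_nhds_zero_of_lt_one (by norm_num) (by norm_num)).mul_const C
    have := ge_of_tendsto' ht (fun N => hEi N 0)
    rw [zero_mul] at this
    exact norm_le_zero_iff.mp this
  have hdown : ∀ n, E n = 0 → E 0 = 0 := by
    intro n
    induction n with
    | zero => exact id
    | succ n ih => intro h; apply ih; rw [hE, h, mul_zero]
  have := hdown _ hz
  simp only [E] at this
  linear_combination this

/-! ### the zeros -/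

lemma zbar_bounds {k : ℕ} (hk : 2 ≤ k) {x : ℝ} (hx : x ∈ Set.Ioo (0 : ℝ) 1)
    (h : 1 - 2 * x + x ^ (k + 2) = 0) : 1 / 2 < x ∧ x < 55 / 100 := by
  obtain ⟨h0, h1⟩ := hx
  have hp : 0 < x ^ (k + 2) := by positivity
  refine ⟨by linarith, ?_⟩
  have h4 : x ^ (k + 2) ≤ x ^ 4 := pow_le_pow_of_le_one h0.le h1.le (by omega)
  by_contra hc
  push Not at hc
  have h5 : 0 ≤ (1 - x) * (1 - x - x ^ 2 - x ^ 3) := by nlinarith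
  have h6 : 0 ≤ 1 - x - x ^ 2 - x ^ 3 := nonneg_of_mul_nonneg_right h5 (by linarith)
  have h7 : (55 / 100 : ℝ) ^ 2 ≤ x ^ 2 := by gcongr
  have h8 : (55 / 100 : ℝ) ^ 3 ≤ x ^ 3 := by gcongr
  norm_num at h7 h8
  linarith

lemma pow_small {k : ℕ} (hk : 2 ≤ k) : ((k : ℝ) + 2) * (55 / 100) ^ (k + 1) < 2 := by
  induction k, hk using Nat.le_induction with
  | base => norm_num
  | succ n hn ih =>
    have hn' : (2 : ℝ) ≤ n := by exact_mod_cast hn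
    have hp : (0 : ℝ) < (55 / 100) ^ (n + 1) := by positivity
    push_cast
    rw [pow_succ]
    nlinarith

def eN (k : ℕ) (x z : ℂ) : ℂ := -2 + ∑ i ∈ Finset.range (k + 2), z ^ i * x ^ (k + 2 - 1 - i)

lemma dN_factor {k : ℕ} {x : ℂ} (h : dN k x = 0) (z : ℂ) : dN k z = eN k x z * (z - x) := by
  have := geom_sum₂_mul z x (k + 2)
  unfold eN
  unfold dN at *
  linear_combination h - this

lemma eN_ne {k : ℕ} (hk : 2 ≤ k) {x z : ℂ} (hx : ‖x‖ < 55 / 100) (hz : ‖z‖ < 55 / 100) :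
    eN k x z ≠ 0 := by
  intro h
  have h2 : (2 : ℂ) = ∑ i ∈ Finset.range (k + 2), z ^ i * x ^ (k + 2 - 1 - i) := by
    unfold eN at h
    linear_combination -h
  have h3 : ‖(2 : ℂ)‖ ≤ ((k : ℝ) + 2) * (55 / 100) ^ (k + 1) := by
    rw [h2]
    refine (norm_sum_le _ _).trans ?_
    calc _ ≤ ∑ i ∈ Finset.range (k + 2), (55 / 100 : ℝ) ^ (k + 1) := by
          refine Finset.sum_le_sum fun i hi => ?_
          rw [Finset.mem_range] at hi
          rw [norm_mul, norm_pow, norm_pow]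
          calc _ ≤ (55 / 100 : ℝ) ^ i * (55 / 100) ^ (k + 2 - 1 - i) := by gcongr
            _ = _ := by rw [← pow_add]; congr 1; omega
      _ = _ := by simp
  rw [Complex.norm_ofNat] at h3
  linarith [pow_small hk]

lemma ofReal_dN {k : ℕ} {x : ℝ} (h : 1 - 2 * x + x ^ (k + 2) = 0) : dN k (x : ℂ) = 0 := by
  unfold dN
  exact_mod_cast h

lemma dN_zero {n : ℕ} {q : ℂ} (hq : ‖q‖ < 55 / 100) (h : dN n q = 0) (zbar : ℕ → ℝ)
    (hz : ∀ k : ℕ, 2 ≤ k → zbar k ∈ Set.Ioo (0 : ℝ) 1 ∧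
        1 - 2 * zbar k + zbar k ^ (k + 2) = 0) : ∃ k : ℕ, 2 ≤ k ∧ q = (zbar k : ℂ) := by
  have hone := one_sub_ne hq
  rcases Nat.lt_or_ge n 2 with hn | hn
  · exfalso
    interval_cases n
    · unfold dN at h
      exact pow_ne_zero 2 hone (by linear_combination h)
    · unfold dN at h
      have h1 : (1 - q) * (1 - q - q ^ 2) = 0 := by linear_combination h
      rcases mul_eq_zero.mp h1 with h1 | h1
      · exact hone h1
      · have h2 : (1 : ℂ) = q + q ^ 2 := by linear_combination h1
        have h3 : ‖(1 : ℂ)‖ ≤ ‖q‖ + ‖q‖ ^ 2 := by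
          rw [h2, ← norm_pow]; exact norm_add_le _ _
        rw [norm_one] at h3
        nlinarith [norm_nonneg q]
  · refine ⟨n, hn, ?_⟩
    obtain ⟨hx, he⟩ := hz n hn
    obtain ⟨hb1, hb2⟩ := zbar_bounds hn hx he
    have hxn : ‖(zbar n : ℂ)‖ < 55 / 100 := by
      rw [Complex.norm_real, Real.norm_of_nonneg hx.1.le]; exact hb2
    rw [dN_factor (ofReal_dN he)] at h
    rcases mul_eq_zero.mp h with h | h
    · exact absurd h (eN_ne hn hxn hq)
    · linear_combination h

section pole
variable {k : ℕ} {x : ℝ}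

lemma dN_at (h : 1 - 2 * x + x ^ (k + 2) = 0) (m : ℕ) :
    dN m (x : ℂ) = ((x ^ (m + 2) - x ^ (k + 2) : ℝ) : ℂ) := by
  have : x ^ (m + 2) - x ^ (k + 2) = 1 - 2 * x + x ^ (m + 2) := by linear_combination -h
  rw [this]
  unfold dN
  push_cast
  ring

lemma wN_at (h : 1 - 2 * x + x ^ (k + 2) = 0) (m : ℕ) :
    wN m (x : ℂ) = ((x / (1 - x) * ((1 - x + x ^ 2) * x ^ (m + 2) - x * x ^ (k + 2)) : ℝ) : ℂ) := by
  have : (1 - x + x ^ 2) * x ^ (m + 2) - x * x ^ (k + 2) =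
    x * (1 - 2 * x) + (1 - x + x ^ 2) * x ^ (m + 2) := by linear_combination -x * h
  rw [this]
  unfold wN
  push_cast
  ring

lemma dN_at_ne (h : 1 - 2 * x + x ^ (k + 2) = 0) (h0 : 0 < x) (h1 : x < 1) {m : ℕ} (hm : m ≠ k) :
    dN m (x : ℂ) ≠ 0 := by
  rw [dN_at h, Complex.ofReal_ne_zero, sub_ne_zero]
  intro hh
  have := (pow_right_injective₀ h0 h1.ne) hh
  omega

lemma wN_at_ne (h : 1 - 2 * x + x ^ (k + 2) = 0) (h0 : 0 < x) (h1 : x < 1) {m : ℕ} (hm : m ≤ k) :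
    wN m (x : ℂ) ≠ 0 := by
  rw [wN_at h, Complex.ofReal_ne_zero]
  have h2 : x * x ^ (k + 2) ≤ x * x ^ (m + 2) :=
    mul_le_mul_of_nonneg_left (pow_le_pow_of_le_one h0.le h1.le (by omega)) h0.le
  have h3 : 0 < x ^ (m + 2) := by positivity
  have h4 : 0 < (1 - x) ^ 2 * x ^ (m + 2) := by
    have : 0 < 1 - x := by linarith
    positivity
  have h5 : 0 < (1 - x + x ^ 2) * x ^ (m + 2) - x * x ^ (k + 2) := by nlinarith
  have : 0 < 1 - x := by linarith
  positivity

lemma num_ne (h : 1 - 2 * x + x ^ (k + 2) = 0) (h0 : 1 / 2 < x) (h1 : x < 55 / 100)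
    (hp : (x : ℂ) ∈ puncDisc) :
    1 + wN k (x : ℂ) * hS (k + 1) (x : ℂ) ≠ 0 := by
  have hx1 : 0 < 1 - x := by linarith
  have hx2 : 0 < 1 - x ^ 2 := by nlinarith
  have hP : 0 < x ^ (k + 2) := by positivity
  have hdd : ∀ l, x ^ (k + 2 + l + 2) ≤ x ^ 2 * x ^ (k + 2) := by
    intro l
    rw [← pow_add]
    exact pow_le_pow_of_le_one (by linarith) (by linarith) (by omega)
  have hB : ‖hS (k + 2) (x : ℂ)‖ ≤ (1 / (x ^ (k + 2) * (1 - x ^ 2))) * (1 - x ^ 2 / (1 - x))⁻¹ := by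
    refine (hS_bound ?_ (fun l => ?_) (fun l => ?_)).2
    · rw [div_lt_one hx1]; nlinarith
    · rw [dN_at h, wN_at h, ← Complex.ofReal_div, Complex.norm_real, Real.norm_eq_abs]
      have hl := hdd l
      set y := x ^ (k + 2 + l + 2) with hy
      have hy0 : 0 < y := by positivity
      have e : x / (1 - x) * ((1 - x + x ^ 2) * y - x * x ^ (k + 2)) / (y - x ^ (k + 2)) =
        x * (x * x ^ (k + 2) - (1 - x + x ^ 2) * y) / ((1 - x) * (x ^ (k + 2) - y)) := by
        rw [div_mul_eq_mul_div, div_div, ← neg_div_neg_eq]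
        congr 1 <;> ring
      have hpos : 0 < x ^ (k + 2) - y := by nlinarith
      have hnum : 0 ≤ x * x ^ (k + 2) - (1 - x + x ^ 2) * y := by
        have : (1 - x + x ^ 2) * y ≤ 1 * (x ^ 2 * x ^ (k + 2)) :=
          mul_le_mul (by nlinarith) hl hy0.le (by norm_num)
        nlinarith
      have hx0 : 0 < x := by linarith
      rw [e, abs_of_nonneg (by positivity), div_le_div_iff₀ (by positivity) hx1]
      have : x * (x * x ^ (k + 2) - (1 - x + x ^ 2) * y) ≤ x ^ 2 * (x ^ (k + 2) - y) := by
        nlinarith [mul_pos hx0 hy0, mul_nonneg (mul_pos hx0 hy0).le (sq_nonneg (1 - x))]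
      nlinarith
    · rw [dN_at h, ← Complex.ofReal_inv, Complex.norm_real, Real.norm_eq_abs, abs_inv, inv_eq_one_div]
      have hl := hdd l
      have hpos : x ^ (k + 2) * (1 - x ^ 2) ≤ |x ^ (k + 2 + l + 2) - x ^ (k + 2)| := by
        rw [abs_sub_comm]
        refine le_trans ?_ (le_abs_self _)
        nlinarith
      exact one_div_le_one_div_of_le (by positivity) hpos
  have hr := hS_rec hp (k + 1)
  have hw0 : wN k (x : ℂ) / dN (k + 1) (x : ℂ) = ((-x : ℝ) : ℂ) := by
    rw [dN_at h, wN_at h, ← Complex.ofReal_div]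
    congr 1
    have : x ^ (k + 1 + 2) - x ^ (k + 2) ≠ 0 := by
      have : x ^ (k + 1 + 2) - x ^ (k + 2) = -((1 - x) * x ^ (k + 2)) := by ring
      rw [this]
      exact neg_ne_zero.mpr (by positivity)
    field_simp
    ring
  have hw1 : wN (k + 1) (x : ℂ) = ((-(x ^ 3 * x ^ (k + 2)) : ℝ) : ℂ) := by
    rw [wN_at h]
    congr 1
    field_simp
    ring
  have e1 : wN k (x : ℂ) * hS (k + 1) (x : ℂ) =
      ((-x : ℝ) : ℂ) * (1 + wN (k + 1) (x : ℂ) * hS (k + 2) (x : ℂ)) := by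
    rw [hr, ← hw0]; ring
  intro hc
  have h2 : ‖wN k (x : ℂ) * hS (k + 1) (x : ℂ)‖ = 1 := by
    rw [show wN k (x : ℂ) * hS (k + 1) (x : ℂ) = -1 by linear_combination hc]; simp
  have hx0 : 0 < x := by linarith
  have hden : 0 < 1 - x - x ^ 2 := by nlinarith
  have h3 : ‖wN (k + 1) (x : ℂ) * hS (k + 2) (x : ℂ)‖ ≤ 8 / 10 := by
    rw [norm_mul, hw1, Complex.norm_real, norm_neg, Real.norm_of_nonneg (by positivity)]
    calc _ ≤ x ^ 3 * x ^ (k + 2) *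
          ((1 / (x ^ (k + 2) * (1 - x ^ 2))) * (1 - x ^ 2 / (1 - x))⁻¹) := by gcongr
      _ = x ^ 3 * (1 - x) / ((1 - x ^ 2) * (1 - x - x ^ 2)) := by
        have : 1 - x ^ 2 / (1 - x) = (1 - x - x ^ 2) / (1 - x) := by field_simp
        rw [this, inv_div]
        field_simp
      _ ≤ 8 / 10 := by
        rw [div_le_div_iff₀ (by positivity) (by norm_num)]
        have hd1 : (6975 / 10000 : ℝ) ≤ 1 - x ^ 2 := by nlinarith
        have hd2 : 1475 / 10000 + (55 / 100 - x) * (155 / 100) ≤ 1 - x - x ^ 2 := by nlinarith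
        have hd3 : x ^ 3 ≤ (55 / 100) ^ 3 := by gcongr
        have hd4 : x ^ 3 * (1 - x) ≤ (55 / 100) ^ 3 * (1 - x) := by gcongr
        have hd5 : 6975 / 10000 * (1475 / 10000 + (55 / 100 - x) * (155 / 100)) ≤
          (1 - x ^ 2) * (1 - x - x ^ 2) := by
          apply mul_le_mul hd1 hd2 _ hx2.le
          nlinarith
        norm_num at hd4 hd5 ⊢
        linarith
  have h4 : ‖wN k (x : ℂ) * hS (k + 1) (x : ℂ)‖ ≤ x * (1 + 8 / 10) := by
    rw [e1, norm_mul, Complex.norm_real, norm_neg, Real.norm_of_nonneg hx0.le]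
    gcongr
    exact (norm_add_le _ _).trans (by rw [norm_one]; gcongr)
  linarith

lemma pole_j (hk : 2 ≤ k) (h : 1 - 2 * x + x ^ (k + 2) = 0) (h0 : 1 / 2 < x) (h1 : x < 55 / 100)
    (hp : (x : ℂ) ∈ puncDisc) (i : ℕ) : ∀ j, j + i = k → ∃ g : ℂ → ℂ, AnalyticAt ℂ g (x : ℂ) ∧
      g (x : ℂ) ≠ 0 ∧ ∀ᶠ z in 𝓝[≠] (x : ℂ), hS j z = g z / (z - (x : ℂ)) := by
  have hmem : ∀ᶠ z in 𝓝[≠] (x : ℂ), z ∈ puncDisc :=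
    eventually_nhdsWithin_of_eventually_nhds (punc_open.mem_nhds hp)
  induction i with
  | zero =>
    rintro j rfl
    simp only [add_zero] at *
    have hen := eN_ne hk hp.1 hp.1
    refine ⟨fun z => (1 + wN j z * hS (j + 1) z) / eN j x z, ?_, ?_, ?_⟩
    · refine AnalyticAt.div (analyticAt_const.add ((wN_an hp.1 _).mul (hS_an hp _ fun l => ?_))) ?_ hen
      · exact dN_at_ne h (by linarith) (by linarith) (by omega)
      · unfold eN
        fun_prop
    · exact div_ne_zero (num_ne h h0 h1 hp) hen
    · filter_upwards [hmem] with z hz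
      rw [hS_rec hz, dN_factor (ofReal_dN h), div_div]
  | succ i ih =>
    intro j hj
    obtain ⟨g, hg, hg0, hge⟩ := ih (j + 1) (by omega)
    have hd : dN j (x : ℂ) ≠ 0 := dN_at_ne h (by linarith) (by linarith) (by omega)
    have hw : wN j (x : ℂ) ≠ 0 := wN_at_ne h (by linarith) (by linarith) (by omega)
    refine ⟨fun z => ((z - x) + wN j z * g z) / dN j z, ?_, ?_, ?_⟩
    · exact ((analyticAt_id.sub analyticAt_const).add ((wN_an hp.1 _).mul hg)).div (dN_an _ _) hd
    · simp only [sub_self, zero_add]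
      exact div_ne_zero (mul_ne_zero hw hg0) hd
    · filter_upwards [hmem, hge, self_mem_nhdsWithin] with z hz hgz hne
      have hne' : z - (x : ℂ) ≠ 0 := sub_ne_zero.mpr hne
      rw [hS_rec hz, hgz, div_div, mul_comm (dN j z), ← div_div]
      congr 1
      field_simp
end pole

def prefF (q : ℂ) : ℂ := 2 * q ^ 5 * (1 - q) / (1 - 2 * q) ^ 2
def restF (q : ℂ) : ℂ := 2 * q * (3 - 10 * q + 9 * q ^ 2 - q ^ 3) / ((1 - 2 * q) ^ 2 * (1 - q))

lemma prefF_an {q : ℂ} (hq : q ∈ puncDisc) : AnalyticAt ℂ prefF q := by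
  have := norm_pos_iff.mp (punc_pos hq)
  have : (1 - 2 * q) ^ 2 ≠ 0 := pow_ne_zero 2 this
  unfold prefF
  fun_prop (disch := assumption)

lemma restF_an {q : ℂ} (hq : q ∈ puncDisc) : AnalyticAt ℂ restF q := by
  have := norm_pos_iff.mp (punc_pos hq)
  have : (1 - 2 * q) ^ 2 * (1 - q) ≠ 0 := mul_ne_zero (pow_ne_zero 2 this) (one_sub_ne hq.1)
  unfold restF
  fun_prop (disch := assumption)

/-- In the punctured disc `{|q| < 55/100} \ {1/2}`, the analytic continuation of `PA`
is meromorphic, with poles exactly the simple poles at the points `z̄_k`, `k ≥ 2`,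
where `z̄_k` is the unique root in `(0,1)` of `1 - 2x + x^{k+2}`. -/
theorem PA_meromorphic_simple_poles :
    ∀ zbar : ℕ → ℝ,
      (∀ k : ℕ, 2 ≤ k → zbar k ∈ Set.Ioo (0 : ℝ) 1 ∧
        1 - 2 * zbar k + zbar k ^ (k + 2) = 0) →
      ∃ f : ℂ → ℂ,
        (∀ q : ℂ, ‖q‖ < 1 / 10 → f q = PAseries q) ∧
        MeromorphicOn f puncDisc ∧
        (∀ q ∈ puncDisc, (¬∃ k : ℕ, 2 ≤ k ∧ q = (zbar k : ℂ)) → AnalyticAt ℂ f q) ∧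
        (∀ k : ℕ, 2 ≤ k →
          ∃ g : ℂ → ℂ, AnalyticAt ℂ g (zbar k : ℂ) ∧ g (zbar k : ℂ) ≠ 0 ∧
            ∀ᶠ z in 𝓝[≠] (zbar k : ℂ), f z = g z / (z - (zbar k : ℂ))) := by
  intro zbar hz
  have hpole : ∀ k : ℕ, 2 ≤ k → (zbar k : ℂ) ∈ puncDisc ∧
      ∃ g : ℂ → ℂ, AnalyticAt ℂ g (zbar k : ℂ) ∧ g (zbar k : ℂ) ≠ 0 ∧
        ∀ᶠ z in 𝓝[≠] (zbar k : ℂ), prefF z * hS 0 z + restF z = g z / (z - (zbar k : ℂ)) := by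
    intro k hk
    obtain ⟨hx, he⟩ := hz k hk
    obtain ⟨h0, h1⟩ := zbar_bounds hk hx he
    have hp : (zbar k : ℂ) ∈ puncDisc := by
      refine ⟨by rw [Complex.norm_real, Real.norm_of_nonneg hx.1.le]; exact h1, fun hc => ?_⟩
      have : zbar k = 1 / 2 := by
        apply Complex.ofReal_injective
        rw [hc]; push_cast; rfl
      linarith
    refine ⟨hp, ?_⟩
    obtain ⟨g, hg, hg0, hge⟩ := pole_j hk he h0 h1 hp k 0 (by omega)
    have hx0 : (zbar k : ℂ) ≠ 0 := Complex.ofReal_ne_zero.mpr hx.1.ne'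
    refine ⟨fun z => prefF z * g z + restF z * (z - zbar k), ?_, ?_, ?_⟩
    · exact ((prefF_an hp).mul hg).add ((restF_an hp).mul (analyticAt_id.sub analyticAt_const))
    · simp only [sub_self, mul_zero, add_zero]
      refine mul_ne_zero ?_ hg0
      exact div_ne_zero (mul_ne_zero (mul_ne_zero two_ne_zero (pow_ne_zero 5 hx0)) (one_sub_ne hp.1))
        (pow_ne_zero 2 (norm_pos_iff.mp (punc_pos hp)))
    · filter_upwards [hge, self_mem_nhdsWithin] with z hgz hne
      have hne' : z - (zbar k : ℂ) ≠ 0 := sub_ne_zero.mpr hne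
      rw [hgz]
      field_simp
  have han : ∀ q ∈ puncDisc, (¬∃ k : ℕ, 2 ≤ k ∧ q = (zbar k : ℂ)) →
      AnalyticAt ℂ (fun z => prefF z * hS 0 z + restF z) q := by
    intro q hq hn
    exact ((prefF_an hq).mul (hS_an hq 0 fun l hl => hn (dN_zero hq.1 hl zbar hz))).add (restF_an hq)
  refine ⟨fun z => prefF z * hS 0 z + restF z, ?_, ?_, han, fun k hk => (hpole k hk).2⟩
  · intro q hq
    have h1 := tS_eq hq
    have h2 : tS 0 q = ∑' m : ℕ, PAterm q (m + 1) := by simp [tS]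
    have h3 := one_sub_ne (small_punc hq).1
    have h4 := norm_pos_iff.mp (punc_pos (small_punc hq))
    unfold PAseries
    rw [← h2, h1]
    show prefF q * hS 0 q + restF q = _ + restF q
    generalize hS 0 q = H
    have h5 : prefF q * H =
        -2 * q ^ 3 * (1 - q) ^ 2 / (1 - 2 * q) ^ 2 * (-q ^ 2 / (1 - q) * H) := by
      unfold prefF
      field_simp
    rw [h5]
  · intro q hq
    by_cases hn : ∃ k : ℕ, 2 ≤ k ∧ q = (zbar k : ℂ)
    · obtain ⟨k, hk, rfl⟩ := hn
      obtain ⟨_, g, hg, _, hge⟩ := hpole k hk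
      have hm : MeromorphicAt (fun z => g z / (z - (zbar k : ℂ))) (zbar k : ℂ) :=
        hg.meromorphicAt.div (analyticAt_id.sub analyticAt_const).meromorphicAt
      exact hm.congr (hge.mono fun z hz => hz.symm)
    · exact (han q hq hn).meromorphicAt
end
end

section
/- There exist ε₀ > 0 and ε₁ > 0 such that for all real q ∈ (1/2-ε₀, 1/2+ε₀), all real v ∈ (3/2-ε₁, 3/2+ε₁), every integer j ≥ 0, and every s ∈ ℂ with max(0, -j + γ) < Re(s) < 1 where γ = log v / log(1/q), the Mellin transform ∫_0^∞ h_j(t;q,v) t^{s-1} dt converges absolutely and equals q^{-2} · (π/sin(πs)) · v q^{j+3s} / (1 - v q^{j+s}), where q^{w} := exp(w log q) for w ∈ ℂ. -/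
open Filter Topology MeasureTheory Complex

noncomputable section

/-- `h_j(t;q,v) = q^{-2} ∑_{ν≥1} (v q^j)^ν / (1 + t q^{-ν-2})` -/
def hfun (q v : ℝ) (j : ℕ) (t : ℝ) : ℝ :=
  (∑' ν : ℕ, (v * q ^ j) ^ (ν + 1) / (1 + t / q ^ (ν + 3))) / q ^ 2

theorem aux_image : (fun x : ℝ => x / (1 - x)) '' Set.Ioo 0 1 = Set.Ioi 0 := by
  ext y
  constructor
  · rintro ⟨x, ⟨h0, h1⟩, rfl⟩
    exact div_pos h0 (by linarith)
  · intro hy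
    have hy : 0 < y := hy
    refine ⟨y / (1 + y), ⟨by positivity, ?_⟩, ?_⟩
    · rw [div_lt_one (by positivity)]; linarith
    · have : 1 - y / (1 + y) = 1 / (1 + y) := by field_simp; ring
      simp only [this]
      field_simp

theorem aux_inj : Set.InjOn (fun x : ℝ => x / (1 - x)) (Set.Ioo 0 1) := by
  rintro x ⟨_, hx⟩ y ⟨_, hy⟩ h
  have h1 : (1 - x) ≠ 0 := by linarith
  have h2 : (1 - y) ≠ 0 := by linarith
  simp only at h
  rw [div_eq_div_iff h1 h2] at h
  linarith

theorem aux_deriv : ∀ x ∈ Set.Ioo (0 : ℝ) 1,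
    HasDerivWithinAt (fun x : ℝ => x / (1 - x)) (1 / (1 - x) ^ 2) (Set.Ioo 0 1) x := by
  rintro x ⟨_, hx⟩
  have h1 : (1 - x) ≠ 0 := by linarith
  have := (hasDerivAt_id x).div ((hasDerivAt_const x (1 : ℝ)).sub (hasDerivAt_id x)) h1
  refine (HasDerivAt.hasDerivWithinAt ?_)
  convert! this using 1
  simp

theorem aux_eqOn (s : ℂ) : Set.EqOn
    (fun x : ℝ => |1 / (1 - x) ^ 2| •
      (((x / (1 - x) : ℝ) : ℂ) ^ (s - 1) • ((1 / (1 + x / (1 - x)) : ℝ) : ℂ)))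
    (fun x : ℝ => (x : ℂ) ^ (s - 1) * (1 - (x : ℂ)) ^ ((1 - s) - 1)) (Set.Ioo 0 1) := by
  rintro x ⟨h0, hx⟩
  have h1 : 0 < 1 - x := by linarith
  have h1c : (1 - (x : ℂ)) ≠ 0 := by exact_mod_cast h1.ne'
  have e1 : 1 / (1 + x / (1 - x)) = 1 - x := by field_simp; ring
  have e2 : |1 / (1 - x) ^ 2| = 1 / (1 - x) ^ 2 := abs_of_pos (by positivity)
  simp only [e1, e2]
  rw [Complex.real_smul, div_eq_mul_inv x, ofReal_mul,
    mul_cpow_ofReal_nonneg h0.le (by positivity), ofReal_inv,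
    inv_cpow _ _ (by rw [arg_ofReal_of_nonneg h1.le]; exact Real.pi_pos.ne), ← cpow_neg]
  push_cast
  have e3 : (1 - (x : ℂ)) ^ (1 - s - 1) = (1 - (x : ℂ)) ^ (-(s - 1)) * (1 - (x : ℂ))⁻¹ := by
    rw [← cpow_neg_one, ← cpow_add _ _ h1c]; congr 1; ring
  rw [e3, smul_eq_mul]
  field_simp

theorem aux_conv {s : ℂ} (h0 : 0 < s.re) (h1 : s.re < 1) :
    MellinConvergent (fun t : ℝ => ((1 / (1 + t) : ℝ) : ℂ)) s := by
  unfold MellinConvergent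
  rw [← aux_image, integrableOn_image_iff_integrableOn_abs_deriv_smul measurableSet_Ioo
    aux_deriv aux_inj, integrableOn_congr_fun (aux_eqOn s) measurableSet_Ioo,
    ← intervalIntegrable_iff_integrableOn_Ioo_of_le zero_le_one]
  exact betaIntegral_convergent h0 (by simpa using h1)

theorem aux_val {s : ℂ} (h0 : 0 < s.re) (h1 : s.re < 1) :
    mellin (fun t : ℝ => ((1 / (1 + t) : ℝ) : ℂ)) s = Real.pi / Complex.sin (Real.pi * s) := by
  unfold mellin
  rw [← aux_image, integral_image_eq_integral_abs_deriv_smul measurableSet_Ioo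
    aux_deriv aux_inj, setIntegral_congr_fun measurableSet_Ioo (aux_eqOn s),
    ← integral_Ioc_eq_integral_Ioo, ← intervalIntegral.integral_of_le zero_le_one]
  change betaIntegral s (1 - s) = _
  rw [← Gamma_mul_Gamma_one_sub, Gamma_mul_Gamma_eq_betaIntegral h0 (by simpa using h1)]
  simp

theorem aux_term {s : ℂ} (h0 : 0 < s.re) (h1 : s.re < 1) {a : ℝ} (ha : 0 < a) (c : ℝ) :
    IntegrableOn (fun t : ℝ => ((c / (1 + t / a) : ℝ) : ℂ) * (t : ℂ) ^ (s - 1)) (Set.Ioi 0) ∧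
    ∫ t in Set.Ioi (0 : ℝ), ((c / (1 + t / a) : ℝ) : ℂ) * (t : ℂ) ^ (s - 1) =
      c * (a : ℂ) ^ s * (Real.pi / Complex.sin (Real.pi * s)) := by
  have hf : (fun t : ℝ => ((c / (1 + t / a) : ℝ) : ℂ) * (t : ℂ) ^ (s - 1)) =
      fun t : ℝ => (c : ℂ) * ((t : ℂ) ^ (s - 1) •
        (fun u : ℝ => ((1 / (1 + u) : ℝ) : ℂ)) (a⁻¹ * t)) := by
    funext t
    have : t / a = a⁻¹ * t := by ring
    simp only [this, smul_eq_mul]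
    push_cast
    ring
  have hc := (MellinConvergent.comp_mul_left (inv_pos.2 ha)).2 (aux_conv h0 h1)
  have hv := mellin_comp_mul_left (fun t : ℝ => ((1 / (1 + t) : ℝ) : ℂ)) s (inv_pos.2 ha)
  rw [aux_val h0 h1] at hv
  rw [hf]
  refine ⟨Integrable.const_mul hc _, ?_⟩
  rw [integral_const_mul]
  unfold mellin at hv
  rw [hv, ofReal_inv, inv_cpow _ _ (by rw [arg_ofReal_of_nonneg ha.le]; exact Real.pi_pos.ne),
    ← cpow_neg, neg_neg, smul_eq_mul, mul_assoc]

theorem aux_integrable_tsum {F : ℕ → ℝ → ℂ} {μ : Measure ℝ} (hF : ∀ i, Integrable (F i) μ)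
    (hs : Summable fun i => ∫ a, ‖F i a‖ ∂μ) : Integrable (fun a => ∑' i, F i a) μ := by
  refine ⟨(AEMeasurable.tsum fun i => (hF i).1.aemeasurable).aestronglyMeasurable, ?_⟩
  have h1 : ∫⁻ a, ‖∑' i, F i a‖ₑ ∂μ ≤ ∑' i, ∫⁻ a, ‖F i a‖ₑ ∂μ := by
    rw [← lintegral_tsum fun i => (hF i).1.enorm]
    exact lintegral_mono fun a => enorm_tsum_le_tsum_enorm
  refine lt_of_le_of_lt h1 ?_
  have h2 : ∀ i, ∫⁻ a, ‖F i a‖ₑ ∂μ = ENNReal.ofReal (∫ a, ‖F i a‖ ∂μ) := fun i =>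
    (ofReal_integral_norm_eq_lintegral_enorm (hF i)).symm
  simp_rw [h2]
  rw [← ENNReal.ofReal_tsum_of_nonneg (fun i => integral_nonneg fun a => norm_nonneg _) hs]
  exact ENNReal.ofReal_lt_top

theorem aux_geom {q : ℝ} (hq : 0 < q) (v : ℝ) (j : ℕ) (s : ℂ) (n : ℕ) :
    (((v * q ^ j) ^ (n + 1) : ℝ) : ℂ) * ((q ^ (n + 3) : ℝ) : ℂ) ^ s =
      v * (q : ℂ) ^ ((j : ℂ) + 3 * s) * ((v : ℂ) * (q : ℂ) ^ ((j : ℂ) + s)) ^ n := by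
  have hqc : (q : ℂ) ≠ 0 := by exact_mod_cast hq.ne'
  have e1 : ((q ^ (n + 3) : ℝ) : ℂ) ^ s = ((q : ℂ) ^ s) ^ (n + 3) := by
    induction (n + 3) with
    | zero => simp
    | succ k ih =>
      rw [pow_succ, ofReal_mul, mul_cpow_ofReal_nonneg (by positivity) hq.le, ih, pow_succ]
  have e2 : (q : ℂ) ^ ((j : ℂ) + 3 * s) = (q : ℂ) ^ j * ((q : ℂ) ^ s) ^ 3 := by
    rw [cpow_add _ _ hqc, cpow_natCast, ← cpow_nat_mul]; norm_num
  have e3 : (q : ℂ) ^ ((j : ℂ) + s) = (q : ℂ) ^ j * (q : ℂ) ^ s := by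
    rw [cpow_add _ _ hqc, cpow_natCast]
  rw [e1, e2, e3]
  push_cast
  ring

theorem aux_lt {q v : ℝ} (hq : 0 < q) (hq1 : q < 1) (hv : 0 < v) (j : ℕ) (s : ℂ)
    (h : -(j : ℝ) + Real.log v / Real.log (1 / q) < s.re) :
    ‖(v : ℂ) * (q : ℂ) ^ ((j : ℂ) + s)‖ < 1 := by
  rw [norm_mul, norm_cpow_eq_rpow_re_of_pos hq, norm_real, Real.norm_of_nonneg hv.le]
  have hl : 0 < Real.log (1 / q) := Real.log_pos (by rw [lt_div_iff₀ hq]; linarith)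
  have h2 : Real.log v / Real.log (1 / q) < j + s.re := by linarith
  rw [div_lt_iff₀ hl, one_div, Real.log_inv] at h2
  rw [← Real.log_neg_iff (by positivity), Real.log_mul hv.ne' (by positivity),
    Real.log_rpow hq]
  simp
  linarith

theorem aux_main {q v : ℝ} (hq : 0 < q) (hq1 : q < 1) (hv : 0 < v) (j : ℕ) (s : ℂ)
    (h0 : 0 < s.re) (h : -(j : ℝ) + Real.log v / Real.log (1 / q) < s.re) (h1 : s.re < 1) :
    IntegrableOn (fun t : ℝ => (hfun q v j t : ℂ) * (t : ℂ) ^ (s - 1))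
      (Set.Ioi (0 : ℝ)) ∧
    ∫ t in Set.Ioi (0 : ℝ), (hfun q v j t : ℂ) * (t : ℂ) ^ (s - 1) =
      (1 / (q : ℂ) ^ 2) * ((Real.pi : ℂ) / Complex.sin (Real.pi * s)) *
        (v : ℂ) * (q : ℂ) ^ ((j : ℂ) + 3 * s) /
        (1 - (v : ℂ) * (q : ℂ) ^ ((j : ℂ) + s)) := by
  set F : ℕ → ℝ → ℂ := fun n t =>
    (((v * q ^ j) ^ (n + 1) / (1 + t / q ^ (n + 3)) : ℝ) : ℂ) * (t : ℂ) ^ (s - 1) with hF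
  have hfun_eq : (fun t : ℝ => (hfun q v j t : ℂ) * (t : ℂ) ^ (s - 1)) =
      fun t => (1 / (q : ℂ) ^ 2) * ∑' n, F n t := by
    funext t
    rw [hF, tsum_mul_right, ← ofReal_tsum, hfun]
    push_cast
    ring
  have hint : ∀ n, IntegrableOn (F n) (Set.Ioi 0) := fun n =>
    (aux_term h0 h1 (pow_pos hq (n + 3)) _).1
  have hsum : Summable fun n => ∫ t in Set.Ioi (0 : ℝ), ‖F n t‖ := by
    have hσ : ∀ n, ((∫ t in Set.Ioi (0 : ℝ), ‖F n t‖ : ℝ) : ℂ) =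
        (v * (q : ℂ) ^ ((j : ℂ) + 3 * (s.re : ℂ)) *
          ((v : ℂ) * (q : ℂ) ^ ((j : ℂ) + (s.re : ℂ))) ^ n) *
          (Real.pi / Complex.sin (Real.pi * (s.re : ℂ))) := by
      intro n
      rw [← aux_geom hq, ← (aux_term (s := (s.re : ℂ)) (by simpa using h0) (by simpa using h1)
        (pow_pos hq (n + 3)) _).2, ← integral_complex_ofReal]
      refine setIntegral_congr_fun measurableSet_Ioi fun t ht => ?_
      have ht : 0 < t := ht
      simp only [hF]
      rw [norm_mul, norm_cpow_eq_rpow_re_of_pos ht, norm_real,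
        Real.norm_of_nonneg (by positivity), ofReal_mul, ofReal_cpow ht.le]
      simp
    rw [← Complex.summable_ofReal]
    simp_rw [hσ]
    refine Summable.mul_right _ (Summable.mul_left _ ?_)
    exact summable_geometric_of_norm_lt_one
      (aux_lt hq hq1 hv j (s.re : ℂ) (by simpa using h))
  rw [hfun_eq]
  refine ⟨(aux_integrable_tsum hint hsum).const_mul _, ?_⟩
  rw [integral_const_mul, ← integral_tsum_of_summable_integral_norm hint hsum]
  have hval : ∀ n, ∫ t in Set.Ioi (0 : ℝ), F n t =
      (v * (q : ℂ) ^ ((j : ℂ) + 3 * s) * ((v : ℂ) * (q : ℂ) ^ ((j : ℂ) + s)) ^ n) *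
          (Real.pi / Complex.sin (Real.pi * s)) := by
    intro n
    rw [← aux_geom hq]
    exact (aux_term h0 h1 (pow_pos hq (n + 3)) _).2
  simp_rw [hval]
  rw [tsum_mul_right, tsum_mul_left, tsum_geometric_of_norm_lt_one (aux_lt hq hq1 hv j s h)]
  ring

/-- For `q` near `1/2`, `v` near `3/2`, `j ≥ 0` and `max(0, -j+γ) < Re(s) < 1`, the
Mellin transform of `h_j` converges absolutely and equals
`q^{-2} (π/sin πs) v q^{j+3s}/(1 - v q^{j+s})`. -/
theorem hfun_mellin_transform :
    ∃ ε₀ : ℝ, 0 < ε₀ ∧ ∃ ε₁ : ℝ, 0 < ε₁ ∧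
      ∀ q v : ℝ, |q - 1 / 2| < ε₀ → |v - 3 / 2| < ε₁ →
        ∀ j : ℕ, ∀ s : ℂ,
          max 0 (-(j : ℝ) + Real.log v / Real.log (1 / q)) < s.re → s.re < 1 →
          IntegrableOn (fun t : ℝ => (hfun q v j t : ℂ) * (t : ℂ) ^ (s - 1))
            (Set.Ioi (0 : ℝ)) ∧
          ∫ t in Set.Ioi (0 : ℝ), (hfun q v j t : ℂ) * (t : ℂ) ^ (s - 1) =
            (1 / (q : ℂ) ^ 2) * ((Real.pi : ℂ) / Complex.sin (Real.pi * s)) *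
              (v : ℂ) * (q : ℂ) ^ ((j : ℂ) + 3 * s) /
              (1 - (v : ℂ) * (q : ℂ) ^ ((j : ℂ) + s)) := by
  refine ⟨1 / 10, by norm_num, 1 / 10, by norm_num, ?_⟩
  intro q v hq hv j s hs h1
  rw [abs_lt] at hq hv
  have h := max_lt_iff.1 hs
  exact aux_main (by linarith) (by linarith) (by linarith) j s h.1 h.2 h1
end
end
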